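/- Let m ∈ ℝ, let μ, ν ∈ M¹_m and let b ∈ ℝ. Then u_μ(x) = u_ν(x) for every x ∈ [b, ∞) if and only if the restrictions of μ and ν to the open interval (b, ∞) coincide (i.e. μ(A) = ν(A) for every Borel set A ⊆ (b, ∞)). -/

import Mathlib

/-!
Since `|x - y| = 2 (y - x)⁺ + x - y`, the potential of a measure of mean `m` is
`u_μ(x) = m - x - 2 ∫ (y - x)⁺ dμ(y)`, so equality of potentials at `x` amounts to equality of the
call functions `x ↦ ∫ (y - x)⁺ dμ(y)` there (`potential_eq`).

For `x ≥ b` the call function only sees the restriction of `μ` to `(b, ∞)`, which gives one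
direction. Conversely, the difference quotients of the call function from the right at `x` converge
to `-μ (x, ∞)` by dominated convergence (`tendsto_call_quotient`), so the tails `μ (x, ∞)`, `x ≥ b`,
are determined by the potential on `[b, ∞)`; these tails determine the restriction to `(b, ∞)`.
-/

open MeasureTheory

/-- The potential function of a measure: `u_μ(x) = -∫ |x - y| dμ(y)`. -/
noncomputable def potential (μ : Measure ℝ) (x : ℝ) : ℝ := -∫ y, |x - y| ∂μ

open Filter Topology

lemma integrable_call (μ : Measure ℝ) [IsProbabilityMeasure μ] (hμ : Integrable id μ) (x : ℝ) :
    Integrable (fun y => max (y - x) 0) μ :=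
  (hμ.sub (integrable_const x)).pos_part

lemma potential_eq (μ : Measure ℝ) [IsProbabilityMeasure μ] (hμ : Integrable id μ) (x : ℝ) :
    potential μ x = (∫ y, y ∂μ) - x - 2 * ∫ y, max (y - x) 0 ∂μ := by
  have h : ∀ y, |x - y| = 2 * max (y - x) 0 + (x - y) := by
    intro y
    rcases le_total x y with h | h
    · rw [abs_of_nonpos (by linarith), max_eq_left (by linarith)]; ring
    · rw [abs_of_nonneg (by linarith), max_eq_right (by linarith)]; ring
  have hid : Integrable (fun y : ℝ => y) μ := hμ
  have hsub : Integrable (fun y : ℝ => x - y) μ := (integrable_const x).sub hid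
  unfold potential
  simp_rw [h]
  rw [integral_add ((integrable_call μ hμ x).const_mul 2) hsub,
    integral_const_mul, integral_sub (integrable_const x) hid]
  simp
  ring

/-- The negated right difference quotients, with step `1 / (n + 1)`, of the call function at `x`
converge to the tail `μ (x, ∞)`. -/
lemma tendsto_call_quotient (μ : Measure ℝ) [IsProbabilityMeasure μ] (hμ : Integrable id μ)
    (x : ℝ) :
    Tendsto (fun n : ℕ => ((∫ y, max (y - x) 0 ∂μ) - ∫ y, max (y - (x + 1 / ((n : ℝ) + 1))) 0 ∂μ)
      * ((n : ℝ) + 1)) atTop (𝓝 (μ.real (Set.Ioi x))) := by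
  rw [← integral_indicator_one measurableSet_Ioi]
  simp_rw [← integral_sub (integrable_call μ hμ _) (integrable_call μ hμ _),
    ← integral_mul_const]
  refine tendsto_integral_of_dominated_convergence (fun _ => 1) (fun n => ?_)
    (integrable_const 1) (fun n => ?_) ?_
  · exact (((integrable_call μ hμ _).sub (integrable_call μ hμ _)).mul_const _).1
  · refine Eventually.of_forall fun y => ?_
    have hn : (0 : ℝ) < n + 1 := by positivity
    have hd : (0 : ℝ) < 1 / ((n : ℝ) + 1) := by positivity
    have h0 : 0 ≤ max (y - x) 0 - max (y - (x + 1 / ((n : ℝ) + 1))) 0 :=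
      sub_nonneg.2 (max_le_max (by linarith) le_rfl)
    have h1 : max (y - x) 0 - max (y - (x + 1 / ((n : ℝ) + 1))) 0 ≤ 1 / ((n : ℝ) + 1) := by
      rw [sub_le_iff_le_add]
      refine max_le ?_ ?_
      · linarith [le_max_left (y - (x + 1 / ((n : ℝ) + 1))) 0]
      · linarith [le_max_right (y - (x + 1 / ((n : ℝ) + 1))) 0]
    rw [Real.norm_of_nonneg (mul_nonneg h0 hn.le)]
    exact (le_div_iff₀ hn).1 h1
  · refine Eventually.of_forall fun y => ?_
    -- pointwise, the sequence is eventually constant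
    rcases le_or_gt y x with h | h
    · rw [Set.indicator_of_notMem (by simpa using h)]
      refine tendsto_const_nhds.congr fun n => ?_
      have hd : (0 : ℝ) < 1 / ((n : ℝ) + 1) := by positivity
      rw [max_eq_right (by linarith), max_eq_right (by linarith)]
      simp
    · rw [Set.indicator_of_mem (by simpa using h)]
      have hev := (tendsto_one_div_add_atTop_nhds_zero_nat (𝕜 := ℝ)).eventually
        (gt_mem_nhds (sub_pos.2 h))
      refine tendsto_const_nhds.congr' ?_
      filter_upwards [hev] with n hn
      have hp : (n : ℝ) + 1 ≠ 0 := by positivity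
      rw [max_eq_left (by linarith), max_eq_left (by linarith)]
      simp only [Pi.one_apply]
      field_simp
      ring

theorem stmt_5 (m : ℝ) (μ ν : Measure ℝ)
    [IsProbabilityMeasure μ] [IsProbabilityMeasure ν]
    (hμ : Integrable id μ) (hν : Integrable id ν)
    (hmμ : ∫ x, x ∂μ = m) (hmν : ∫ x, x ∂ν = m) (b : ℝ) :
    (∀ x ∈ Set.Ici b, potential μ x = potential ν x) ↔
      (∀ A : Set ℝ, MeasurableSet A → A ⊆ Set.Ioi b → μ A = ν A) := by
  constructor
  · intro h
    have hc : ∀ x, b ≤ x → ∫ y, max (y - x) 0 ∂μ = ∫ y, max (y - x) 0 ∂ν := by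
      intro x hx
      have := h x hx
      rw [potential_eq μ hμ, potential_eq ν hν, hmμ, hmν] at this
      linarith
    have ht : ∀ x, b ≤ x → μ (Set.Ioi x) = ν (Set.Ioi x) := by
      intro x hx
      have h1 := tendsto_call_quotient μ hμ x
      have h2 := tendsto_call_quotient ν hν x
      have h3 : μ.real (Set.Ioi x) = ν.real (Set.Ioi x) := by
        refine tendsto_nhds_unique h1 (h2.congr fun n => ?_)
        have hd : (0 : ℝ) < 1 / ((n : ℝ) + 1) := by positivity
        rw [hc x hx, hc _ (by linarith)]
      exact (measureReal_eq_measureReal_iff).1 h3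
    have hr : μ.restrict (Set.Ioi b) = ν.restrict (Set.Ioi b) := by
      refine Measure.ext_of_Iic _ _ fun a => ?_
      rw [Measure.restrict_apply measurableSet_Iic, Measure.restrict_apply measurableSet_Iic]
      rcases le_total b a with hab | hab
      · have he : Set.Iic a ∩ Set.Ioi b = Set.Ioi b \ Set.Ioi a := by
          ext y; simp [and_comm]
        have hs : Set.Ioi a ⊆ Set.Ioi b := Set.Ioi_subset_Ioi hab
        rw [he, measure_sdiff hs measurableSet_Ioi.nullMeasurableSet (measure_ne_top _ _),
          measure_sdiff hs measurableSet_Ioi.nullMeasurableSet (measure_ne_top _ _),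
          ht b le_rfl, ht a hab]
      · have he : Set.Iic a ∩ Set.Ioi b = ∅ := by
          ext y
          simp only [Set.mem_inter_iff, Set.mem_Iic, Set.mem_Ioi, Set.mem_empty_iff_false,
            iff_false, not_and, not_lt]
          intro hy
          linarith
        simp [he]
    intro A hA hAb
    rw [← Measure.restrict_eq_self μ hAb, hr, Measure.restrict_eq_self ν hAb]
  · intro h x hx
    have hx : b ≤ x := hx
    have hr : μ.restrict (Set.Ioi b) = ν.restrict (Set.Ioi b) := by
      ext A hA
      rw [Measure.restrict_apply hA, Measure.restrict_apply hA]
      exact h _ (hA.inter measurableSet_Ioi) Set.inter_subset_right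
    have hz : ∀ y, y ∉ Set.Ioi b → max (y - x) 0 = 0 := by
      intro y hy
      have hy : y ≤ b := by simpa using hy
      exact max_eq_right (by linarith)
    rw [potential_eq μ hμ, potential_eq ν hν, hmμ, hmν,
      ← setIntegral_eq_integral_of_forall_compl_eq_zero (μ := μ) hz,
      ← setIntegral_eq_integral_of_forall_compl_eq_zero (μ := ν) hz, hr]
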